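/- arXiv:2305.14636 — 2 statements merged into one kernel-verified Lean document; each statement's English description precedes it below -/
import Mathlib

section
/- Let G be a connected non-complete finite simple graph and let q be a real number with q > 0 or q ≤ −1. Then the q-distance matrix 𝔻_q of G has at least three distinct eigenvalues, and its largest eigenvalue (the spectral radius) has multiplicity one. -/
/-- The `q`-distance matrix of a graph `G`: the `(x,y)` entry is
`1 + 1/q + ⋯ + 1/q^(d(x,y)-1) = ∑_{j=0}^{d(x,y)-1} q^{-j}` (and `0` on the diagonal,
since `d(x,x) = 0`). -/
noncomputable def qDistMatrix {V : Type*} [Fintype V] (G : SimpleGraph V) (q : ℝ) : Matrix V V ℝ :=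
  Matrix.of fun x y => ∑ j ∈ Finset.range (G.dist x y), (1 / q) ^ j

/-- `θ` is an eigenvalue of the real matrix `M`. -/
def IsEigenval {n : Type*} [Fintype n] (M : Matrix n n ℝ) (θ : ℝ) : Prop :=
  ∃ v : n → ℝ, v ≠ 0 ∧ M.mulVec v = θ • v

/-!
Since `1 / q ≥ -1`, the partial geometric sums of `1 / q` are nonnegative, so `𝔻_q` is entrywise
nonnegative with entry `1` at every edge; as `G` is connected, `𝔻_q` is irreducible and
Perron–Frobenius makes its largest eigenvalue `θ` simple. If all the other eigenvalues were equal to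
some `t`, then `𝔻_q - t • 1 = (θ - t) • u uᵀ` would have vanishing `2 × 2` minors. For a path
`x, y, z` with `d(x, z) = 2`, two of these minors give `t ^ 2 = 1` and `1 + 1 / q = -t`, hence
`(1 + 1 / q) ^ 2 = 1`, which forces `q = -1 / 2`.
-/

open Matrix

section Irreducible

lemma isIrreducible_of_connected {n R : Type*} [Ring R] [LinearOrder R] [Nontrivial n]
    {G : SimpleGraph n} (hG : G.Connected) {A : Matrix n n R} (hA : ∀ x y, 0 ≤ A x y)
    (hadj : ∀ x y, G.Adj x y → 0 < A x y) : A.IsIrreducible := by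
  let := A.toQuiver
  have path_of_walk {x y : n} (p : G.Walk x y) : Nonempty (Quiver.Path x y) := by
    induction p with
    | nil => exact ⟨.nil⟩
    | cons h _ ih => exact ih.map (.comp (Quiver.Hom.toPath (PLift.up (hadj _ _ h))))
  refine ⟨hA, fun x y => ?_⟩
  obtain ⟨z, hzy⟩ := hG.preconnected.exists_adj_of_nontrivial y
  obtain ⟨p⟩ := hG.preconnected x z
  obtain ⟨p'⟩ := path_of_walk p
  exact ⟨p'.cons ⟨hadj z y hzy.symm⟩, Nat.succ_pos _⟩

variable {n : Type*} [Fintype n]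

lemma eq_zero_of_nonneg_of_mulVec_eq_smul {R : Type*} [Ring R] [LinearOrder R]
    [IsStrictOrderedRing R] {A : Matrix n n R} (hA : A.IsIrreducible) {w : n → R} {t : R}
    (hw : 0 ≤ w) (hAw : A *ᵥ w = t • w) {x : n} (hx : w x = 0) : w = 0 := by
  let := A.toQuiver
  have zero_of_edge {a b : n} (hab : 0 < A a b) (ha : w a = 0) : w b = 0 := by
    have hsum : ∑ j, A a j * w j = 0 := by
      simpa [mulVec, dotProduct, ha] using congrFun hAw a
    have hterm := (Finset.sum_eq_zero_iff_of_nonneg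
      fun j _ => mul_nonneg (hA.nonneg a j) (hw j)).mp hsum b (Finset.mem_univ b)
    exact (mul_eq_zero.mp hterm).resolve_left hab.ne'
  funext y
  obtain ⟨p, -⟩ := hA.connected x y
  induction p with
  | nil => exact hx
  | cons _ e ih => exact zero_of_edge e.down ih

variable [DecidableEq n]

open scoped ComplexOrder MatrixOrder in
lemma posSemidef_smul_one_sub_of_eigenvalues_le {𝕜 : Type*} [RCLike 𝕜] {A : Matrix n n 𝕜}
    (hA : A.IsHermitian) {t : ℝ} (ht : ∀ i, hA.eigenvalues i ≤ t) :
    (t • (1 : Matrix n n 𝕜) - A).PosSemidef := by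
  rw [← Algebra.algebraMap_eq_smul_one, ← Matrix.le_iff]
  refine le_algebraMap_of_spectrum_le ?_ hA
  rw [hA.spectrum_real_eq_range_eigenvalues]
  exact Set.forall_mem_range.mpr ht

variable {A : Matrix n n ℝ} {t : ℝ}

-- Passing from `v` to `|v|` keeps the norm and does not decrease the quadratic form of `A`.
lemma mulVec_abs_eq_smul_abs (hA : ∀ x y, 0 ≤ A x y) (ht : (t • 1 - A).PosSemidef) {v : n → ℝ}
    (hv : A *ᵥ v = t • v) : A *ᵥ |v| = t • |v| := by
  have hform : v ⬝ᵥ A *ᵥ v ≤ |v| ⬝ᵥ A *ᵥ |v| := by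
    simp only [dotProduct, mulVec, Finset.mul_sum]
    refine Finset.sum_le_sum fun i _ => Finset.sum_le_sum fun j _ => ?_
    calc v i * (A i j * v j) ≤ |v i * (A i j * v j)| := le_abs_self _
      _ = |v| i * (A i j * |v| j) := by simp [abs_mul, abs_of_nonneg (hA i j)]
  have hnorm : |v| ⬝ᵥ |v| = v ⬝ᵥ v := by simp [dotProduct]
  have hexpand (w : n → ℝ) : (t • 1 - A) *ᵥ w = t • w - A *ᵥ w := by
    rw [sub_mulVec, smul_mulVec, one_mulVec]
  have hzero : star |v| ⬝ᵥ (t • 1 - A) *ᵥ |v| = 0 := by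
    refine le_antisymm ?_ (ht.dotProduct_mulVec_nonneg |v|)
    rw [star_trivial, hexpand, dotProduct_sub, dotProduct_smul, hnorm, sub_nonpos]
    simpa [hv] using hform
  rw [ht.dotProduct_mulVec_zero_iff, hexpand, sub_eq_zero] at hzero
  exact hzero.symm

lemma eq_zero_of_mulVec_eq_smul_of_apply_eq_zero (hA : A.IsIrreducible)
    (ht : (t • 1 - A).PosSemidef) {v : n → ℝ} (hv : A *ᵥ v = t • v) {x : n} (hx : v x = 0) :
    v = 0 := by
  have habs : |v| = 0 :=
    eq_zero_of_nonneg_of_mulVec_eq_smul hA (abs_nonneg v)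
      (mulVec_abs_eq_smul_abs hA.nonneg ht hv) (x := x) (by simp [hx])
  funext y
  exact abs_eq_zero.mp (congrFun habs y)

lemma apply_smul_eq_apply_smul_of_mulVec_eq_smul (hA : A.IsIrreducible)
    (ht : (t • 1 - A).PosSemidef) {u v : n → ℝ} (hu : A *ᵥ u = t • u) (hv : A *ᵥ v = t • v)
    (x : n) : u x • v = v x • u := by
  refine sub_eq_zero.mp (eq_zero_of_mulVec_eq_smul_of_apply_eq_zero hA ht (x := x) ?_ ?_)
  · rw [mulVec_sub, mulVec_smul, mulVec_smul, hu, hv, smul_sub, smul_comm t, smul_comm t]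
  · simp [mul_comm]

lemma eq_of_eigenvalues_eq_of_isIrreducible (hA : A.IsIrreducible) (hH : A.IsHermitian) {i j : n}
    (hi : ∀ k, hH.eigenvalues k ≤ hH.eigenvalues i)
    (hij : hH.eigenvalues j = hH.eigenvalues i) : j = i := by
  by_contra hne
  set b := hH.eigenvectorBasis
  have hpsd := posSemidef_smul_one_sub_of_eigenvalues_le hH hi
  have hbj : A *ᵥ b j = hH.eigenvalues i • ⇑(b j) := hij ▸ hH.mulVec_eigenvectorBasis j
  have hprop : b j i • b i = b i i • b j := by
    ext y
    exact congrFun (apply_smul_eq_apply_smul_of_mulVec_eq_smul hA hpsd hbj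
      (hH.mulVec_eigenvectorBasis i) i) y
  have hbji : b j i = 0 := by
    simpa [inner_smul_right, b.inner_eq_zero (Ne.symm hne)]
      using congrArg (inner ℝ (b i)) hprop
  refine b.orthonormal.ne_zero j ?_
  ext y
  exact congrFun (eq_zero_of_mulVec_eq_smul_of_apply_eq_zero hA hpsd hbj hbji) y

theorem card_filter_eigenvalues_eq_sup'_of_isIrreducible [Nonempty n] (hA : A.IsIrreducible)
    (hH : A.IsHermitian) :
    (Finset.univ.filter fun i =>
      hH.eigenvalues i = Finset.univ.sup' Finset.univ_nonempty hH.eigenvalues).card = 1 := by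
  obtain ⟨i, -, hi⟩ := Finset.exists_mem_eq_sup' Finset.univ_nonempty hH.eigenvalues
  have hmax (k : n) : hH.eigenvalues k ≤ hH.eigenvalues i :=
    hi ▸ Finset.le_sup' _ (Finset.mem_univ k)
  refine Finset.card_eq_one.mpr ⟨i, ?_⟩
  ext j
  simp only [hi, Finset.mem_filter, Finset.mem_univ, true_and, Finset.mem_singleton]
  exact ⟨eq_of_eigenvalues_eq_of_isIrreducible hA hH hmax, fun h => h ▸ rfl⟩

end Irreducible

section RankOne

lemma sq_apply_eq_one_of_sub_smul_one_eq_smul_vecMulVec {n R : Type*} [DecidableEq n]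
    [CommRing R] {A : Matrix n n R} {t c : R} {u v : n → R}
    (h : A - t • (1 : Matrix n n R) = c • vecMulVec u v) {x y z : n}
    (hxy : x ≠ y) (hyz : y ≠ z) (hxz : x ≠ z) (hxx : A x x = 0) (hyy : A y y = 0)
    (hAxy : A x y = 1) (hAyx : A y x = 1) (hAyz : A y z = 1) : A x z ^ 2 = 1 := by
  have entry (a b : n) : A a b - t * (1 : Matrix n n R) a b = c * (u a * v b) := by
    simpa [vecMulVec_apply] using congrFun₂ h a b
  have exx := entry x x
  have eyy := entry y y
  have exy := entry x y
  have eyx := entry y x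
  have eyz := entry y z
  have exz := entry x z
  simp only [hxx, hyy, hAxy, hAyx, hAyz, one_apply_eq, one_apply_ne hxy, one_apply_ne hxy.symm,
    one_apply_ne hyz, one_apply_ne hxz, mul_one, mul_zero, sub_zero, zero_sub]
    at exx eyy exy eyx eyz exz
  have ht : t ^ 2 = 1 := by
    calc t ^ 2 = (c * (u x * v x)) * (c * (u y * v y)) := by rw [← exx, ← eyy]; ring
      _ = (c * (u x * v y)) * (c * (u y * v x)) := by ring
      _ = 1 := by rw [← exy, ← eyx, one_mul]
  have hxz_eq : A x z = -t := by
    calc A x z = (c * (u x * v z)) * (c * (u y * v x)) := by rw [← exz, ← eyx, mul_one]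
      _ = (c * (u x * v x)) * (c * (u y * v z)) := by ring
      _ = -t := by rw [← exx, ← eyz, mul_one]
  rw [hxz_eq, neg_sq, ht]

variable {n : Type*} [Fintype n] [DecidableEq n]

lemma sub_smul_one_eq_smul_vecMulVec {𝕜 : Type*} [RCLike 𝕜] {A : Matrix n n 𝕜}
    (hA : A.IsHermitian) {i : n} {t : ℝ} (ht : ∀ j ≠ i, hA.eigenvalues j = t) :
    A - t • (1 : Matrix n n 𝕜) = (hA.eigenvalues i - t) •
      vecMulVec (hA.eigenvectorBasis i) (star ⇑(hA.eigenvectorBasis i)) := by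
  set b := hA.eigenvectorBasis
  apply toEuclideanLin.injective
  refine b.toBasis.ext fun j => ?_
  have horth : star ⇑(b i) ⬝ᵥ ⇑(b j) = if i = j then 1 else 0 := by
    rw [dotProduct_comm, ← EuclideanSpace.inner_eq_star_dotProduct,
      orthonormal_iff_ite.mp b.orthonormal]
  have haction : (A - t • (1 : Matrix n n 𝕜)) *ᵥ b j = (hA.eigenvalues j - t) • ⇑(b j) := by
    rw [sub_mulVec, hA.mulVec_eigenvectorBasis, smul_mulVec, one_mulVec, sub_smul]
  ext k
  rw [OrthonormalBasis.coe_toBasis, toLpLin_apply, toLpLin_apply, haction, smul_mulVec,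
    vecMulVec_mulVec, horth]
  rcases eq_or_ne i j with rfl | hij
  · simp
  · simp [hij, ht j hij.symm]

lemma isEigenval_eigenvalues {A : Matrix n n ℝ} (hA : A.IsHermitian) (i : n) :
    IsEigenval A (hA.eigenvalues i) := by
  refine ⟨hA.eigenvectorBasis i, fun h => hA.eigenvectorBasis.orthonormal.ne_zero i ?_,
    hA.mulVec_eigenvectorBasis i⟩
  ext x
  exact congrFun h x

lemma exists_three_isEigenval [Nontrivial n] {A : Matrix n n ℝ} (hA : A.IsHermitian) {i : n}
    (hi : ∀ j ≠ i, hA.eigenvalues j ≠ hA.eigenvalues i)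
    (hrank : ∀ (t c : ℝ) (u v : n → ℝ), A - t • (1 : Matrix n n ℝ) ≠ c • vecMulVec u v) :
    ∃ a b c : ℝ, a ≠ b ∧ a ≠ c ∧ b ≠ c ∧ IsEigenval A a ∧ IsEigenval A b ∧ IsEigenval A c := by
  obtain ⟨j, hj⟩ := exists_ne i
  obtain ⟨k, hk, hkj⟩ : ∃ k ≠ i, hA.eigenvalues k ≠ hA.eigenvalues j := by
    by_contra! h
    exact hrank _ _ _ _ (sub_smul_one_eq_smul_vecMulVec hA h)
  exact ⟨_, _, _, (hi j hj).symm, (hi k hk).symm, hkj.symm, isEigenval_eigenvalues hA i,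
    isEigenval_eigenvalues hA j, isEigenval_eigenvalues hA k⟩

end RankOne

lemma geom_sum_nonneg_of_neg_one_le {R : Type*} [Ring R] [LinearOrder R] [IsStrictOrderedRing R]
    {r : R} (hr : -1 ≤ r) (n : ℕ) : 0 ≤ ∑ j ∈ Finset.range n, r ^ j := by
  rcases eq_or_ne n 0 with rfl | hn
  · simp
  · refine not_lt.mp fun hneg => ?_
    exact ((geom_sum_neg_iff hn).mp hneg).2.not_ge (neg_le_iff_add_nonneg.mp hr)

lemma exists_adj_adj_dist_eq_two {V : Type*} {G : SimpleGraph V} (hG : G.Connected) {v w : V}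
    (hne : v ≠ w) (hvw : ¬ G.Adj v w) : ∃ x y z, G.Adj x y ∧ G.Adj y z ∧ G.dist x z = 2 := by
  obtain ⟨p, hp⟩ := hG.exists_walk_length_eq_dist v w
  obtain ⟨x, y, z, hxy, hyz, hxz, hne_xz⟩ :=
    p.exists_adj_adj_not_adj_ne hp (hG.one_lt_dist_of_ne_of_not_adj hne hvw)
  exact ⟨x, y, z, hxy, hyz, le_antisymm (SimpleGraph.dist_le (.cons hxy (.cons hyz .nil)))
    (hG.one_lt_dist_of_ne_of_not_adj hne_xz hxz)⟩

section QDistMatrix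

variable {V : Type*} [Fintype V] {G : SimpleGraph V} {q : ℝ} {x y z : V}

lemma qDistMatrix_apply_self : qDistMatrix G q x x = 0 := by
  simp [qDistMatrix]

lemma qDistMatrix_apply_of_adj (hxy : G.Adj x y) : qDistMatrix G q x y = 1 := by
  simp [qDistMatrix, SimpleGraph.dist_eq_one_iff_adj.mpr hxy]

lemma qDistMatrix_apply_of_dist_eq_two (hxy : G.dist x y = 2) :
    qDistMatrix G q x y = 1 + 1 / q := by
  simp [qDistMatrix, hxy, Finset.sum_range_succ]

lemma isIrreducible_qDistMatrix [Nontrivial V] (hG : G.Connected) (hq : -1 ≤ 1 / q) :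
    (qDistMatrix G q).IsIrreducible :=
  isIrreducible_of_connected hG (fun _ _ => geom_sum_nonneg_of_neg_one_le hq _)
    fun _ _ hxy => by rw [qDistMatrix_apply_of_adj hxy]; exact one_pos

lemma qDistMatrix_sub_smul_one_ne_smul_vecMulVec [DecidableEq V] (hq₀ : q ≠ 0)
    (hq₂ : q ≠ -1 / 2) (hxy : G.Adj x y) (hyz : G.Adj y z) (hxz : G.dist x z = 2) (t c : ℝ)
    (u v : V → ℝ) : qDistMatrix G q - t • (1 : Matrix V V ℝ) ≠ c • vecMulVec u v := by
  intro h
  have hne : x ≠ z := by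
    rintro rfl
    simp at hxz
  have hsq := sq_apply_eq_one_of_sub_smul_one_eq_smul_vecMulVec h hxy.ne hyz.ne hne
    qDistMatrix_apply_self qDistMatrix_apply_self (qDistMatrix_apply_of_adj hxy)
    (qDistMatrix_apply_of_adj hxy.symm) (qDistMatrix_apply_of_adj hyz)
  rw [qDistMatrix_apply_of_dist_eq_two hxz] at hsq
  field_simp at hsq
  exact hq₂ (by linarith)

end QDistMatrix

/-- For a connected non-complete graph `G` and `q > 0` or `q ≤ -1`, the `q`-distance
matrix has at least three distinct eigenvalues, and its largest eigenvalue
(the spectral radius) has multiplicity one. -/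
theorem stmt3 {V : Type*} [Fintype V] [DecidableEq V] [Nonempty V] (G : SimpleGraph V)
    (hconn : G.Connected) (hnc : ∃ x y : V, x ≠ y ∧ ¬ G.Adj x y)
    (q : ℝ) (hq : 0 < q ∨ q ≤ -1)
    (hH : (qDistMatrix G q).IsHermitian) :
    (∃ a b c : ℝ, a ≠ b ∧ a ≠ c ∧ b ≠ c ∧
        IsEigenval (qDistMatrix G q) a ∧ IsEigenval (qDistMatrix G q) b ∧
        IsEigenval (qDistMatrix G q) c) ∧
      (Finset.univ.filter fun i : V =>
          hH.eigenvalues i = Finset.univ.sup' Finset.univ_nonempty hH.eigenvalues).card = 1 := by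
  obtain ⟨v, w, hne, hvw⟩ := hnc
  have : Nontrivial V := ⟨v, w, hne⟩
  have hq_inv : -1 ≤ 1 / q := by
    rcases hq with hq | hq
    · linarith [one_div_pos.mpr hq]
    · rw [le_div_iff_of_neg (by linarith)]
      linarith
  have hq₀ : q ≠ 0 := by rintro rfl; norm_num at hq
  have hq₂ : q ≠ -1 / 2 := by rintro rfl; norm_num at hq
  have hcard :=
    card_filter_eigenvalues_eq_sup'_of_isIrreducible (isIrreducible_qDistMatrix hconn hq_inv) hH
  refine ⟨?_, hcard⟩
  obtain ⟨i, hi⟩ := Finset.card_eq_one.mp hcard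
  simp only [Finset.ext_iff, Finset.mem_filter, Finset.mem_univ, true_and,
    Finset.mem_singleton] at hi
  have hsimple : ∀ j ≠ i, hH.eigenvalues j ≠ hH.eigenvalues i := fun j hj h =>
    hj ((hi j).mp (h.trans ((hi i).mpr rfl)))
  obtain ⟨x, y, z, hxy, hyz, hxz⟩ := exists_adj_adj_dist_eq_two hconn hne hvw
  exact exists_three_isEigenval hH hsimple
    (qDistMatrix_sub_smul_one_ne_smul_vecMulVec hq₀ hq₂ hxy hyz hxz)
end

section
/- Let Γ be a distance-regular graph of diameter D ≥ 3 and valency k, and let θ ≠ k be an eigenvalue of the adjacency matrix of Γ. Then θ is of classical (−1)-type if and only if θ = −k and Γ is bipartite. -/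
/-- `G` is a distance-regular graph of diameter `D` with intersection numbers
`p h i j = p^h_{ij}`: for any two vertices `x, y` at distance `h`, the number of
vertices `z` with `d(x,z) = i` and `d(y,z) = j` equals `p h i j`. -/
structure IsDRG {V : Type*} [Fintype V] (G : SimpleGraph V) (D : ℕ)
    (p : ℕ → ℕ → ℕ → ℕ) : Prop where
  connected : G.Connected
  dist_le : ∀ x y : V, G.dist x y ≤ D
  exists_dist_eq : ∃ x y : V, G.dist x y = D
  inter : ∀ h i j : ℕ, h ≤ D → i ≤ D → j ≤ D → ∀ x y : V, G.dist x y = h →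
    {z : V | G.dist x z = i ∧ G.dist y z = j}.ncard = p h i j

/-- `u` is the standard sequence of `θ` for a distance-regular graph with
intersection numbers `p` (so valency `k = b₀ = p 0 1 1`, `cᵢ = p i 1 (i-1)`,
`aᵢ = p i 1 i`, `bᵢ = p i 1 (i+1)`). -/
def IsStdSeq (D : ℕ) (p : ℕ → ℕ → ℕ → ℕ) (θ : ℝ) (u : ℕ → ℝ) : Prop :=
  u 0 = 1 ∧ u 1 = θ / (p 0 1 1 : ℝ) ∧
    ∀ i : ℕ, 1 ≤ i → i ≤ D - 1 →
      (p i 1 (i - 1) : ℝ) * u (i - 1) + (p i 1 i : ℝ) * u i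
          + (p i 1 (i + 1) : ℝ) * u (i + 1) = θ * u i

/-- The sequence `u` (a standard sequence) is of classical `q`-type:
`u i = (1/q) * u (i-1) + c` for `i = 1, …, D`, for some real `c`. -/
def IsClassicalQType (D : ℕ) (q : ℝ) (u : ℕ → ℝ) : Prop :=
  ∃ c : ℝ, ∀ i : ℕ, 1 ≤ i → i ≤ D → u i = (1 / q) * u (i - 1) + c

/-- `θ` is an eigenvalue of the adjacency matrix of `G`. -/
def IsAdjEigenval {V : Type*} [Fintype V] (G : SimpleGraph V) [DecidableRel G.Adj]
    (θ : ℝ) : Prop :=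
  ∃ v : V → ℝ, v ≠ 0 ∧ (G.adjMatrix ℝ).mulVec v = θ • v

/-!
Write `a i = p i 1 i` and `k = p 0 1 1`. Classical `(-1)`-type means that `u (i + 1) + u i` is
constant, so `u` alternates between `1` and `θ / k`. The three-term recurrence at `i = 2` then gives
`a 2 = 0`. Since `D ≥ 3`, this forces `a 1 = 0`, and the recurrence at `i = 1` becomes
`θ ^ 2 = k ^ 2`. An eigenvector `v` for `-k` satisfies `∑ (v x + v y) ^ 2 = 0`, summed over
adjacent pairs, so it changes sign along every edge and its sign pattern is a bipartition.
Conversely, a bipartite graph has `a i = 0` for all `i`, and for `θ = -k` the recurrence yields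
`u i = (-1) ^ i`.
-/

open Finset Matrix

lemma exists_adj_dist_eq_of_dist_eq_succ {V : Type*} {G : SimpleGraph V} {x y : V} {n : ℕ}
    (h : G.dist y x = n + 1) : ∃ z, G.Adj x z ∧ G.dist y z = n := by
  obtain ⟨w, hw⟩ := G.exists_walk_of_dist_ne_zero (u := x) (v := y) (by rw [G.dist_comm]; omega)
  cases w with
  | nil => simp at h
  | @cons _ z _ hxz w =>
    refine ⟨z, hxz, ?_⟩
    have hlen : w.length = n := by
      rw [SimpleGraph.Walk.length_cons, G.dist_comm, h] at hw
      omega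
    have hle : G.dist y z ≤ w.length := G.dist_comm ▸ SimpleGraph.dist_le w
    have hdiff := hxz.diff_dist_adj (u := y)
    omega

section Bipartite

variable {V : Type*} {G : SimpleGraph V}

lemma isBipartite_iff_exists_set :
    G.IsBipartite ↔ ∃ s : Set V, ∀ x y : V, G.Adj x y → (x ∈ s ↔ y ∉ s) := by
  constructor
  · rintro ⟨c⟩
    refine ⟨{x | c x = 0}, fun x y hxy => ?_⟩
    have hne := c.valid hxy
    simp only [Set.mem_ofPred_eq]
    omega
  · rintro ⟨s, hs⟩
    refine SimpleGraph.IsBipartiteWith.isBipartite (s := s) (t := sᶜ)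
      ⟨disjoint_compl_right, fun x y hxy => ?_⟩
    have := hs x y hxy
    simp only [Set.mem_compl_iff]
    tauto

lemma dist_ne_dist_of_isBipartite_of_adj {x y z : V} (hG : G.IsBipartite)
    (hyx : G.Reachable y x) (hxz : G.Adj x z) : G.dist y x ≠ G.dist y z := by
  have c : G.Coloring Bool := hG.toColoring (by simp)
  obtain ⟨w, hw⟩ := hyx.exists_walk_length_eq_dist
  obtain ⟨w', hw'⟩ := (hyx.trans hxz.reachable).exists_walk_length_eq_dist
  intro h
  have hx := c.even_length_iff_congr w
  have hz := c.even_length_iff_congr w'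
  rw [hw, h] at hx
  rw [hw'] at hz
  have hne := c.valid hxz
  grind

end Bipartite

section Spectrum

variable {V R : Type*} {G : SimpleGraph V}

lemma isBipartite_of_forall_adj_eq_neg [AddCommGroup R] [LinearOrder R] [IsOrderedAddMonoid R]
    {v : V → R} (hc : G.Preconnected) (hv : v ≠ 0)
    (hneg : ∀ x y, G.Adj x y → v y = -v x) : G.IsBipartite := by
  obtain ⟨a, ha⟩ := Function.ne_iff.1 hv
  have hne : ∀ x, v x ≠ 0 := by
    intro x
    obtain ⟨w⟩ := hc x a
    induction w with
    | nil => exact ha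
    | cons hxy _ ih => simpa [hneg _ _ hxy] using ih ha
  refine isBipartite_iff_exists_set.2 ⟨{x | 0 < v x}, fun x y hxy => ?_⟩
  simp only [Set.mem_ofPred_eq, hneg x y hxy, Left.neg_pos_iff, not_lt]
  exact ⟨le_of_lt, fun h => lt_of_le_of_ne h (hne x).symm⟩

variable [Fintype V] [DecidableRel G.Adj]

lemma sum_sum_adj_add_sq [CommRing R] (v : V → R) :
    ∑ x, ∑ y, (if G.Adj x y then (v x + v y) ^ 2 else 0) =
      2 * ∑ x, v x * (G.degree x * v x + (G.adjMatrix R *ᵥ v) x) := by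
  let f : V → V → R := fun x y => if G.Adj x y then v x * (v x + v y) else 0
  have hrow (x : V) : ∑ y, f x y = v x * (G.degree x * v x + (G.adjMatrix R *ᵥ v) x) := by
    simp only [f, ← sum_filter, ← G.neighborFinset_eq_filter, ← mul_sum, sum_add_distrib,
      sum_const, G.card_neighborFinset_eq_degree, nsmul_eq_mul, G.adjMatrix_mulVec_apply]
  calc ∑ x, ∑ y, (if G.Adj x y then (v x + v y) ^ 2 else 0)
      = ∑ x, ∑ y, (f x y + f y x) := by
        refine sum_congr rfl fun x _ => sum_congr rfl fun y _ => ?_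
        simp only [f, G.adj_comm y x]
        split_ifs <;> ring
    _ = 2 * ∑ x, ∑ y, f x y := by
        simp only [sum_add_distrib]
        rw [sum_comm (f := fun x y => f y x), two_mul]
    _ = _ := by simp only [hrow]

lemma eq_neg_of_adj_of_adjMatrix_mulVec_eq [CommRing R] [LinearOrder R] [IsStrictOrderedRing R]
    {v : V → R} (hv : ∀ x, (G.adjMatrix R *ᵥ v) x = -(G.degree x * v x))
    {x y : V} (hxy : G.Adj x y) : v y = -v x := by
  have hnonneg (x y : V) : 0 ≤ if G.Adj x y then (v x + v y) ^ 2 else 0 := by positivity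
  have hsum : ∑ x, ∑ y, (if G.Adj x y then (v x + v y) ^ 2 else 0) = 0 := by
    simp [sum_sum_adj_add_sq, hv]
  have hrow := (sum_eq_zero_iff_of_nonneg fun x _ => sum_nonneg fun y _ => hnonneg x y).1 hsum x
    (mem_univ x)
  have hterm := (sum_eq_zero_iff_of_nonneg fun y _ => hnonneg x y).1 hrow y (mem_univ y)
  rw [if_pos hxy, sq_eq_zero_iff] at hterm
  exact eq_neg_of_add_eq_zero_right hterm

end Spectrum

lemma IsAdjEigenval.isBipartite_of_isRegularOfDegree {V : Type*} [Fintype V] {G : SimpleGraph V}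
    [DecidableRel G.Adj] {d : ℕ} (hθ : IsAdjEigenval G (-(d : ℝ))) (hc : G.Preconnected)
    (hd : G.IsRegularOfDegree d) : G.IsBipartite := by
  obtain ⟨v, hv0, hv⟩ := hθ
  refine isBipartite_of_forall_adj_eq_neg hc hv0 fun x y =>
    eq_neg_of_adj_of_adjMatrix_mulVec_eq fun x => ?_
  rw [hv, hd.degree_eq x, Pi.smul_apply, smul_eq_mul, neg_mul]

namespace IsDRG

variable {V : Type*} [Fintype V] {G : SimpleGraph V} {D : ℕ} {p : ℕ → ℕ → ℕ → ℕ} {i j : ℕ}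
  {x y : V}

lemma exists_dist_eq_of_le (h : IsDRG G D p) (hi : i ≤ D) : ∃ x y, G.dist x y = i := by
  induction hi using Nat.decreasingInduction with
  | self => exact h.exists_dist_eq
  | of_succ i _ ih =>
    obtain ⟨x, y, hxy⟩ := ih
    obtain ⟨z, -, hz⟩ := exists_adj_dist_eq_of_dist_eq_succ hxy
    exact ⟨x, z, hz⟩

lemma card_neighborFinset_dist_eq [DecidableRel G.Adj] (h : IsDRG G D p) (hD : 0 < D) (hj : j ≤ D)
    (hxy : G.dist y x = i) : #{z ∈ G.neighborFinset x | G.dist y z = j} = p i 1 j := by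
  have hi : i ≤ D := hxy ▸ h.dist_le y x
  rw [← h.inter i 1 j hi hD hj x y (G.dist_comm.trans hxy), ← Set.ncard_coe_finset]
  simp only [coe_filter, SimpleGraph.mem_neighborFinset, SimpleGraph.dist_eq_one_iff_adj]

lemma isRegularOfDegree [DecidableRel G.Adj] (h : IsDRG G D p) (hD : 0 < D) :
    G.IsRegularOfDegree (p 0 1 1) := by
  intro x
  rw [← h.card_neighborFinset_dist_eq hD hD (G.dist_self (v := x)),
    filter_true_of_mem, G.card_neighborFinset_eq_degree]
  exact fun z hz => SimpleGraph.dist_eq_one_iff_adj.2 ((G.mem_neighborFinset x z).1 hz)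

lemma apply_one_ne_zero_iff_exists_adj (h : IsDRG G D p) (hD : 0 < D) (hj : j ≤ D)
    (hxy : G.dist y x = i) : p i 1 j ≠ 0 ↔ ∃ z, G.Adj x z ∧ G.dist y z = j := by
  classical
  rw [← h.card_neighborFinset_dist_eq hD hj hxy, card_ne_zero]
  simp [Finset.Nonempty]

lemma c_add_a_add_b_eq_valency (h : IsDRG G D p) (hi : i + 1 < D) :
    p (i + 1) 1 i + p (i + 1) 1 (i + 1) + p (i + 1) 1 (i + 2) = p 0 1 1 := by
  classical
  have hD : 0 < D := by omega
  obtain ⟨y, x, hxy⟩ := h.exists_dist_eq_of_le hi.le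
  have hmaps : (G.neighborFinset x : Set V).MapsTo (G.dist y)
      ({i, i + 1, i + 2} : Finset ℕ) := by
    intro z hz
    have hdiff := SimpleGraph.Adj.diff_dist_adj (u := y) ((G.mem_neighborFinset x z).1 hz)
    simp only [coe_insert, coe_singleton, Set.mem_insert_iff, Set.mem_singleton_iff]
    omega
  have hcard := card_eq_sum_card_fiberwise hmaps
  rw [sum_insert (by simp), sum_pair (by simp), G.card_neighborFinset_eq_degree,
    h.isRegularOfDegree hD x, h.card_neighborFinset_dist_eq hD (by omega) hxy,
    h.card_neighborFinset_dist_eq hD (by omega) hxy,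
    h.card_neighborFinset_dist_eq hD (by omega) hxy] at hcard
  omega

lemma b_ne_zero (h : IsDRG G D p) (hi : i < D) : p i 1 (i + 1) ≠ 0 := by
  obtain ⟨y, x, hxy⟩ := h.exists_dist_eq_of_le (i := i + 1) hi
  obtain ⟨z, hxz, hyz⟩ := exists_adj_dist_eq_of_dist_eq_succ hxy
  exact (h.apply_one_ne_zero_iff_exists_adj (by omega) hi hyz).2 ⟨x, hxz.symm, hxy⟩

lemma a_eq_zero_of_isBipartite (h : IsDRG G D p) (hG : G.IsBipartite) (hD : 0 < D) (hi : i ≤ D) :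
    p i 1 i = 0 := by
  obtain ⟨y, x, hxy⟩ := h.exists_dist_eq_of_le hi
  by_contra ha
  obtain ⟨z, hxz, hyz⟩ := (h.apply_one_ne_zero_iff_exists_adj hD hi hxy).1 ha
  exact dist_ne_dist_of_isBipartite_of_adj hG (h.connected y x) hxz (hxy.trans hyz.symm)

lemma a_one_eq_zero_of_a_eq_zero (h : IsDRG G D p) (hi : i + 1 < D)
    (ha : p (i + 1) 1 (i + 1) = 0) : p 1 1 1 = 0 := by
  have hD : 0 < D := by omega
  have hnotAdj : ∀ {a b c : V}, G.dist c a = i + 1 → G.dist c b = i + 1 → ¬G.Adj a b :=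
    fun ha' hb hab => (h.apply_one_ne_zero_iff_exists_adj hD hi.le ha').2 ⟨_, hab, hb⟩ ha
  by_contra ha₁
  -- A geodesic `w, y, …, x', x` of length `i + 2`, and a triangle `w, y, z` on its first edge.
  obtain ⟨x, w, hxw⟩ := h.exists_dist_eq_of_le (i := i + 2) hi
  obtain ⟨y, hwy, hxy⟩ := exists_adj_dist_eq_of_dist_eq_succ hxw
  obtain ⟨x', hxx', hyx'⟩ := exists_adj_dist_eq_of_dist_eq_succ (G.dist_comm.trans hxy)
  obtain ⟨z, hwz, hyz⟩ := (h.apply_one_ne_zero_iff_exists_adj hD hD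
    (SimpleGraph.dist_eq_one_iff_adj.2 hwy.symm)).1 ha₁
  rw [SimpleGraph.dist_eq_one_iff_adj] at hyz
  rw [G.dist_comm] at hyx'
  have hx'w : G.dist x' w = i + 1 := by
    have hy := hwy.diff_dist_adj (u := x')
    have hw := hxx'.diff_dist_adj (u := w)
    rw [G.dist_comm (u := w), G.dist_comm (u := w)] at hw
    omega
  have hx'z : G.dist x' z = i := by
    have hne : G.dist x' z ≠ i + 1 := fun hz => hnotAdj hx'w hz hwz
    have hw := hwz.diff_dist_adj (u := x')
    have hy := hyz.diff_dist_adj (u := x')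
    omega
  have hxz : G.dist x z = i + 1 := by
    have hw := hwz.diff_dist_adj (u := x)
    have hx := hxx'.diff_dist_adj (u := z)
    rw [G.dist_comm (u := z), G.dist_comm (u := z)] at hx
    omega
  exact hnotAdj hxy hxz hyz

end IsDRG

lemma isClassicalQType_neg_one_iff {D : ℕ} {u : ℕ → ℝ} :
    IsClassicalQType D (-1) u ↔ ∃ c, ∀ i < D, u (i + 1) + u i = c := by
  refine exists_congr fun c => ⟨fun h i hi => ?_, fun h i h₁ hi => ?_⟩
  · have hstep : u (i + 1) = 1 / (-1) * u i + c := h (i + 1) (by omega) hi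
    linear_combination hstep
  · obtain ⟨i, rfl⟩ := Nat.exists_eq_add_of_le' h₁
    rw [Nat.add_sub_cancel]
    linear_combination h i hi

namespace IsStdSeq

variable {V : Type*} [Fintype V] {G : SimpleGraph V} {D : ℕ} {p : ℕ → ℕ → ℕ → ℕ} {θ : ℝ}
  {u : ℕ → ℝ}

lemma recurrence {i : ℕ} (hu : IsStdSeq D p θ u) (hi : i + 1 < D) :
    p (i + 1) 1 i * u i + p (i + 1) 1 (i + 1) * u (i + 1) + p (i + 1) 1 (i + 2) * u (i + 2) =
      θ * u (i + 1) :=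
  hu.2.2 (i + 1) (by omega) (by omega)

lemma valency_mul_apply_one (hu : IsStdSeq D p θ u) (h : IsDRG G D p) (hD : 0 < D) :
    p 0 1 1 * u 1 = θ := by
  rw [hu.2.1, mul_div_cancel₀ _ (Nat.cast_ne_zero.2 (h.b_ne_zero hD))]

lemma a_mul_sub_eq_of_eq {i : ℕ} (hu : IsStdSeq D p θ u) (h : IsDRG G D p) (hi : i + 1 < D)
    (hper : u (i + 2) = u i) :
    p (i + 1) 1 (i + 1) * (u (i + 1) - u i) = θ * u (i + 1) - p 0 1 1 * u i := by
  have hrec := hu.recurrence hi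
  have hval : (p (i + 1) 1 i + p (i + 1) 1 (i + 1) + p (i + 1) 1 (i + 2) : ℝ) = p 0 1 1 :=
    mod_cast h.c_add_a_add_b_eq_valency hi
  rw [hper] at hrec
  linear_combination hrec - u i * hval

lemma eq_neg_valency_of_isClassicalQType (hu : IsStdSeq D p θ u) (h : IsDRG G D p) (hD : 3 ≤ D)
    (hθ : θ ≠ p 0 1 1) (hq : IsClassicalQType D (-1) u) : θ = -(p 0 1 1 : ℝ) := by
  obtain ⟨c, hc⟩ := isClassicalQType_neg_one_iff.1 hq
  have hper {i : ℕ} (hi : i + 1 < D) : u (i + 2) = u i := by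
    linarith [hc i (by omega), hc (i + 1) hi]
  have hu₀ : u 0 = 1 := hu.1
  have hu₁ : p 0 1 1 * u 1 = θ := hu.valency_mul_apply_one h (by omega)
  have hu₂ : u 2 = 1 := (hper (by omega)).trans hu₀
  have hu₁_ne : u 1 ≠ 1 := fun h₁ => hθ (by rw [← hu₁, h₁, mul_one])
  have ha₂ : p 2 1 2 = 0 := by
    have := hu.a_mul_sub_eq_of_eq h (i := 1) hD (hper hD)
    rw [hu₂, hu₁, mul_one, sub_self] at this
    exact mod_cast (mul_eq_zero.1 this).resolve_right (sub_ne_zero.2 hu₁_ne.symm)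
  have ha₁ : p 1 1 1 = 0 := h.a_one_eq_zero_of_a_eq_zero (i := 1) hD ha₂
  have hθu₁ : θ * u 1 = p 0 1 1 := by
    have := hu.a_mul_sub_eq_of_eq h (i := 0) (by omega) (hper (by omega))
    rw [zero_add, ha₁, hu₀, Nat.cast_zero, zero_mul, mul_one] at this
    exact sub_eq_zero.1 this.symm
  have hsq : θ ^ 2 = (p 0 1 1 : ℝ) ^ 2 := by
    linear_combination (p 0 1 1 : ℝ) * hθu₁ - θ * hu₁
  exact (sq_eq_sq_iff_eq_or_eq_neg.1 hsq).resolve_left hθ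

lemma add_eq_zero_of_neg_valency (hu : IsStdSeq D p (-(p 0 1 1 : ℝ)) u) (h : IsDRG G D p)
    (ha : ∀ i, i + 1 < D → p (i + 1) 1 (i + 1) = 0) {i : ℕ} (hi : i < D) : u (i + 1) + u i = 0 := by
  have hk : (p 0 1 1 : ℝ) ≠ 0 := Nat.cast_ne_zero.2 (h.b_ne_zero (by omega))
  induction i with
  | zero => rw [hu.2.1, hu.1, neg_div_self hk, neg_add_cancel]
  | succ i ih =>
    have hrec := hu.recurrence hi
    have hval : (p (i + 1) 1 i + p (i + 1) 1 (i + 1) + p (i + 1) 1 (i + 2) : ℝ) = p 0 1 1 :=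
      mod_cast h.c_add_a_add_b_eq_valency hi
    have hb : (p (i + 1) 1 (i + 2) : ℝ) ≠ 0 := Nat.cast_ne_zero.2 (h.b_ne_zero hi)
    rw [ha i hi, Nat.cast_zero] at hrec hval
    have hmul : (p (i + 1) 1 (i + 2) : ℝ) * (u (i + 2) + u (i + 1)) = 0 := by
      linear_combination hrec + u (i + 1) * hval - p (i + 1) 1 i * ih (by omega)
    exact (mul_eq_zero.1 hmul).resolve_left hb

end IsStdSeq

/-- For a distance-regular graph `Γ` of diameter `D ≥ 3` and valency `k`, an eigenvalue
`θ ≠ k` is of classical `(-1)`-type iff `θ = -k` and `Γ` is bipartite. -/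
theorem stmt7 {V : Type*} [Fintype V] (G : SimpleGraph V) [DecidableRel G.Adj]
    (D : ℕ) (p : ℕ → ℕ → ℕ → ℕ) (hdrg : IsDRG G D p) (hD : 3 ≤ D)
    (θ : ℝ) (hθ : IsAdjEigenval G θ) (hθk : θ ≠ (p 0 1 1 : ℝ))
    (u : ℕ → ℝ) (hu : IsStdSeq D p θ u) :
    IsClassicalQType D (-1) u ↔
      (θ = -(p 0 1 1 : ℝ) ∧ ∃ s : Set V, ∀ x y : V, G.Adj x y → (x ∈ s ↔ y ∉ s)) := by
  rw [← isBipartite_iff_exists_set]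
  have hD' : 0 < D := by omega
  constructor
  · intro hq
    obtain rfl := hu.eq_neg_valency_of_isClassicalQType hdrg hD hθk hq
    exact ⟨rfl, hθ.isBipartite_of_isRegularOfDegree hdrg.connected.preconnected
      (hdrg.isRegularOfDegree hD')⟩
  · rintro ⟨rfl, hG⟩
    have ha (i : ℕ) (hi : i + 1 < D) : p (i + 1) 1 (i + 1) = 0 :=
      hdrg.a_eq_zero_of_isBipartite hG hD' hi.le
    exact isClassicalQType_neg_one_iff.2 ⟨0, fun i hi => hu.add_eq_zero_of_neg_valency hdrg ha hi⟩
end
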